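/- Let I ⊆ N be nonempty and independent, and let J ⊆ N satisfy |J ∩ N_j| ≤ 1 for every j ∈ I. Then J is independent. -/

import Mathlib

/-- Independence in the laminar matroid on `N = {1, …, n}` given by the interval family `𝓛`
with bounds `b`: a set `I ⊆ N` is independent if `|I ∩ L| ≤ b L` for every `L ∈ 𝓛`. -/
def LamIndep (n : ℕ) (𝓛 : Set (Set ℕ)) (b : Set ℕ → ℕ) (I : Set ℕ) : Prop :=
  I ⊆ Set.Icc 1 n ∧ ∀ L ∈ 𝓛, (I ∩ L).ncard ≤ b L

/-- If `I` is a nonempty independent set and `J ⊆ N` picks at most one element from each class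
`N_j = {i ∈ N : rep i = j}`, `j ∈ I`, then `J` is independent. Here `Lf i` is the smallest
member of `𝓛` containing `i` and meeting `I`, and `rep i` is the largest element of `Lf i ∩ I`
that is `≤ i` if one exists, and the smallest element of `Lf i ∩ I` that is `> i` otherwise. -/
theorem indep_of_le_one_per_class
    (n : ℕ) (hn : 1 ≤ n)
    (𝓛 : Set (Set ℕ)) (h𝓛fin : 𝓛.Finite)
    (h𝓛 : ∀ L ∈ 𝓛, L.Nonempty ∧ L ⊆ Set.Icc 1 n ∧ ∃ p q : ℕ, L = Set.Icc p q)
    (hlam : ∀ L ∈ 𝓛, ∀ L' ∈ 𝓛, L ⊆ L' ∨ L' ⊆ L ∨ Disjoint L L')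
    (hN : Set.Icc 1 n ∈ 𝓛)
    (I : Set ℕ) (hI : I ⊆ Set.Icc 1 n) (hIne : I.Nonempty)
    (Lf : ℕ → Set ℕ)
    (hLf : ∀ i ∈ Set.Icc 1 n, Lf i ∈ 𝓛 ∧ i ∈ Lf i ∧ (Lf i ∩ I).Nonempty ∧
      ∀ L ∈ 𝓛, i ∈ L → (L ∩ I).Nonempty → Lf i ⊆ L)
    (rep : ℕ → ℕ)
    (hrep₁ : ∀ i ∈ Set.Icc 1 n, (∃ j ∈ Lf i ∩ I, j ≤ i) →
      rep i ∈ Lf i ∩ I ∧ rep i ≤ i ∧ ∀ j ∈ Lf i ∩ I, j ≤ i → j ≤ rep i)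
    (hrep₂ : ∀ i ∈ Set.Icc 1 n, (¬ ∃ j ∈ Lf i ∩ I, j ≤ i) →
      rep i ∈ Lf i ∩ I ∧ i < rep i ∧ ∀ j ∈ Lf i ∩ I, i < j → rep i ≤ j)
    (b : Set ℕ → ℕ) (hb : ∀ L ∈ 𝓛, 1 ≤ b L)
    (hIind : LamIndep n 𝓛 b I)
    (J : Set ℕ) (hJ : J ⊆ Set.Icc 1 n)
    (hJcard : ∀ j ∈ I, (J ∩ {i | i ∈ Set.Icc 1 n ∧ rep i = j}).ncard ≤ 1) :
    LamIndep n 𝓛 b J := by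
  have hrep : ∀ i ∈ Set.Icc 1 n, rep i ∈ Lf i ∩ I := by
    intro i hi
    by_cases h : ∃ j ∈ Lf i ∩ I, j ≤ i
    · exact (hrep₁ i hi h).1
    · exact (hrep₂ i hi h).1
  have hJfin : J.Finite := (Set.finite_Icc 1 n).subset hJ
  have hIfin : I.Finite := (Set.finite_Icc 1 n).subset hI
  have hinj : ∀ i ∈ J, ∀ i' ∈ J, rep i = rep i' → i = i' := by
    intro i hi i' hi' h
    have hc := hJcard (rep i) (hrep i (hJ hi)).2
    rw [Set.ncard_le_one (hJfin.subset Set.inter_subset_left)] at hc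
    exact hc i ⟨hi, hJ hi, rfl⟩ i' ⟨hi', hJ hi', h.symm⟩
  refine ⟨hJ, fun L hL => ?_⟩
  by_cases hne : (L ∩ I).Nonempty
  · refine le_trans ?_ (hIind.2 L hL)
    refine Set.ncard_le_ncard_of_injOn rep ?_ ?_ (hIfin.subset Set.inter_subset_left)
    · rintro i ⟨hi, hiL⟩
      have h := hrep i (hJ hi)
      exact ⟨h.2, (hLf i (hJ hi)).2.2.2 L hL hiL hne h.1⟩
    · rintro i ⟨hi, -⟩ i' ⟨hi', -⟩ h
      exact hinj i hi i' hi' h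
  · refine le_trans ?_ (hb L hL)
    rw [Set.ncard_le_one (hJfin.subset Set.inter_subset_left)]
    rintro i ⟨hi, hiL⟩ i' ⟨hi', hiL'⟩
    apply hinj i hi i' hi'
    have hsub : ∀ k ∈ J, k ∈ L → L ⊆ Lf k := by
      intro k hk hkL
      obtain ⟨h1, h2, h3, -⟩ := hLf k (hJ hk)
      rcases hlam L hL _ h1 with h | h | h
      · exact h
      · exact absurd (h3.mono (Set.inter_subset_inter_left I h)) hne
      · exact absurd h2 (Set.disjoint_left.1 h hkL)
    have hle : ∀ k ∈ J, k ∈ L → ∀ k' ∈ J, k' ∈ L → Lf k ⊆ Lf k' := by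
      intro k hk hkL k' hk' hkL'
      obtain ⟨h1, -, h3, -⟩ := hLf k' (hJ hk')
      exact (hLf k (hJ hk)).2.2.2 _ h1 (hsub k' hk' hkL' hkL) h3
    have heq : Lf i = Lf i' := (hle i hi hiL i' hi' hiL').antisymm (hle i' hi' hiL' i hi hiL)
    obtain ⟨p, q, hpq⟩ := (h𝓛 L hL).2.2
    have hside : ∀ j ∈ I, (j ≤ i ↔ j ≤ i') := by
      intro j hj
      have hjL : j ∉ L := fun h => hne ⟨j, h, hj⟩
      rw [hpq, Set.mem_Icc] at hjL hiL hiL'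
      omega
    by_cases h : ∃ j ∈ Lf i ∩ I, j ≤ i
    · have h' : ∃ j ∈ Lf i' ∩ I, j ≤ i' := by
        obtain ⟨j, hj, hji⟩ := h
        exact ⟨j, heq ▸ hj, (hside j hj.2).1 hji⟩
      obtain ⟨a1, a2, a3⟩ := hrep₁ i (hJ hi) h
      obtain ⟨c1, c2, c3⟩ := hrep₁ i' (hJ hi') h'
      exact le_antisymm (c3 _ (heq ▸ a1) ((hside _ a1.2).1 a2))
        (a3 _ (heq.symm ▸ c1) ((hside _ c1.2).2 c2))
    · have h' : ¬ ∃ j ∈ Lf i' ∩ I, j ≤ i' := by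
        rintro ⟨j, hj, hji⟩
        exact h ⟨j, heq.symm ▸ hj, (hside j hj.2).2 hji⟩
      obtain ⟨a1, a2, a3⟩ := hrep₂ i (hJ hi) h
      obtain ⟨c1, c2, c3⟩ := hrep₂ i' (hJ hi') h'
      have s1 := hside _ a1.2
      have s2 := hside _ c1.2
      exact le_antisymm (a3 _ (heq.symm ▸ c1) (by omega))
        (c3 _ (heq ▸ a1) (by omega))
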